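/- arXiv:1007.2579 — 2 statements merged into one kernel-verified Lean document; each statement's English description precedes it below -/
import Mathlib

section
/- Let $R$ be a commutative ring and let $q,u,v\in R$ be invertible. Define the $2\times 2$ matrices $M_1(u)=\begin{pmatrix} uq-u^{-1}q^{-1} & 0 \\ u-u^{-1} & u^{-1}q-uq^{-1}\end{pmatrix}$ and $M_2(u)=\begin{pmatrix} u^{-1}q-uq^{-1} & u-u^{-1} \\ 0 & uq-u^{-1}q^{-1}\end{pmatrix}$ over $R$. Then the Yang–Baxter equation $M_1(u)\,M_2(uv)\,M_1(v)=M_2(v)\,M_1(uv)\,M_2(u)$ holds. -/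
/-- The unnormalized trigonometric R-matrix `u σ₁ - u⁻¹ σ₁⁻¹` in the two-dimensional
representation of the three-string Hecke algebra. -/
def M1 {R : Type*} [CommRing R] (q u : Rˣ) : Matrix (Fin 2) (Fin 2) R :=
  !![((u * q : Rˣ) : R) - ((u⁻¹ * q⁻¹ : Rˣ) : R), 0;
     (u : R) - ((u⁻¹ : Rˣ) : R), ((u⁻¹ * q : Rˣ) : R) - ((u * q⁻¹ : Rˣ) : R)]

/-- The unnormalized trigonometric R-matrix `u σ₂ - u⁻¹ σ₂⁻¹` in the two-dimensional
representation of the three-string Hecke algebra. -/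
def M2 {R : Type*} [CommRing R] (q u : Rˣ) : Matrix (Fin 2) (Fin 2) R :=
  !![((u⁻¹ * q : Rˣ) : R) - ((u * q⁻¹ : Rˣ) : R), (u : R) - ((u⁻¹ : Rˣ) : R);
     0, ((u * q : Rˣ) : R) - ((u⁻¹ * q⁻¹ : Rˣ) : R)]

theorem yang_baxter_M (R : Type*) [CommRing R] (q u v : Rˣ) :
    M1 q u * M2 q (u * v) * M1 q v = M2 q v * M1 q (u * v) * M2 q u := by
  have hq := q.mul_inv
  have hu := u.mul_inv
  have hv := v.mul_inv
  ext i j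
  fin_cases i <;> fin_cases j <;>
    simp only [M1, M2, mul_inv_rev, Units.val_mul, Matrix.mul_apply, Fin.sum_univ_two,
      Matrix.of_apply, Matrix.cons_val', Matrix.cons_val_zero, Matrix.cons_val_one,
      Matrix.cons_val_fin_one, Fin.zero_eta, Fin.mk_one, Fin.isValue] <;>
    grind
end

section
/- Let $R$ be a commutative ring and let $q,u,v\in R$ be invertible. Define the $2\times 2$ matrices $S_1(u)=\begin{pmatrix} u^{-1}q-uq^{-1} & 0 \\ u^{-1}-u & uq-u^{-1}q^{-1}\end{pmatrix}$ and $S_2(u)=\begin{pmatrix} uq-u^{-1}q^{-1} & u^{-1}-u \\ 0 & u^{-1}q-uq^{-1}\end{pmatrix}$ over $R$. Then the Yang–Baxter equation $S_1(u)\,S_2(uv)\,S_1(v)=S_2(v)\,S_1(uv)\,S_2(u)$ holds. -/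
/-- The unnormalized trigonometric R-matrix `u⁻¹ σ₁ - u σ₁⁻¹` in the two-dimensional
representation of the three-string Hecke algebra. -/
def S1 {R : Type*} [CommRing R] (q u : Rˣ) : Matrix (Fin 2) (Fin 2) R :=
  !![((u⁻¹ * q : Rˣ) : R) - ((u * q⁻¹ : Rˣ) : R), 0;
     ((u⁻¹ : Rˣ) : R) - (u : R), ((u * q : Rˣ) : R) - ((u⁻¹ * q⁻¹ : Rˣ) : R)]

/-- The unnormalized trigonometric R-matrix `u⁻¹ σ₂ - u σ₂⁻¹` in the two-dimensional
representation of the three-string Hecke algebra. -/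
def S2 {R : Type*} [CommRing R] (q u : Rˣ) : Matrix (Fin 2) (Fin 2) R :=
  !![((u * q : Rˣ) : R) - ((u⁻¹ * q⁻¹ : Rˣ) : R), ((u⁻¹ : Rˣ) : R) - (u : R);
     0, ((u⁻¹ * q : Rˣ) : R) - ((u * q⁻¹ : Rˣ) : R)]

theorem yang_baxter_S (R : Type*) [CommRing R] (q u v : Rˣ) :
    S1 q u * S2 q (u * v) * S1 q v = S2 q v * S1 q (u * v) * S2 q u := by
  have hq : (q : R) * ((q⁻¹ : Rˣ) : R) = 1 := q.mul_inv
  have hu : (u : R) * ((u⁻¹ : Rˣ) : R) = 1 := u.mul_inv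
  have hv : (v : R) * ((v⁻¹ : Rˣ) : R) = 1 := v.mul_inv
  simp only [S1, S2, mul_inv, Units.val_mul]
  generalize (q : R) = a, ((q⁻¹ : Rˣ) : R) = ainv at *
  generalize (u : R) = b, ((u⁻¹ : Rˣ) : R) = binv at *
  generalize (v : R) = c, ((v⁻¹ : Rˣ) : R) = cinv at *
  ext i j
  fin_cases i <;> fin_cases j <;> simp [Matrix.mul_apply, Fin.sum_univ_two] <;> grind
end
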